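/- arXiv:1404.7379 — 2 statements merged into one kernel-verified Lean document; each statement's English description precedes it below -/
import Mathlib

section
/- Division theorem (normal form) for free modules over a field with valuation: Let f be a nonzero homogeneous element of K[x₁,…,xₙ]^d and let g₁,…,g_s be nonzero homogeneous elements of K[x₁,…,xₙ]^d. Then there exist polynomials h₁,…,h_s ∈ K[x₁,…,xₙ] and an element r ∈ K[x₁,…,xₙ]^d such that f = h₁g₁ + ⋯ + h_s g_s + r, such that in_{w,≺}(hᵢgᵢ) ≥ in_{w,≺}(f) in the term order for every i with hᵢgᵢ ≠ 0, such that in_{w,≺}(r) ≥ in_{w,≺}(f) in the term order if r ≠ 0, and such that no term of r is divisible by in_{w,≺}(gᵢ) for any i ∈ {1,…,s}. -/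
open MvPolynomial

/-- A (real-valued, additive) valuation on a field `K`:
`v(ab) = v(a)+v(b)` for nonzero `a,b`, `v(a+b) ≥ min(v a, v b)`, and `v a = ∞ ↔ a = 0`. -/
structure ValOn (K : Type*) [Field K] where
  v : K → WithTop ℝ
  v_mul : ∀ a b : K, a ≠ 0 → b ≠ 0 → v (a * b) = v a + v b
  v_add_min : ∀ a b : K, min (v a) (v b) ≤ v (a + b)
  v_eq_top_iff : ∀ a : K, v a = ⊤ ↔ a = 0

/-- A module monomial `x^u·e_k` of `R[x₁,…,xₙ]^d`, recorded as the pair `(u, k)`. -/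
abbrev MMon (n d : ℕ) := (Fin n →₀ ℕ) × Fin d

/-- A term `c·x^u·e_k`, recorded as `(c, (u, k))`. -/
abbrev Term (R : Type*) (n d : ℕ) := R × MMon n d

/-- The strict order on module monomials induced by the monomial order `mo`:
`x^α·e_i ≺ x^β·e_j` iff `x^α ≺ x^β`, or `x^α = x^β` and `i < j`. -/
def mmLt {n d : ℕ} (mo : MonomialOrder (Fin n)) (a b : MMon n d) : Prop :=
  mo.toSyn a.1 < mo.toSyn b.1 ∨ (a.1 = b.1 ∧ a.2 < b.2)

/-- The dot product `w·u` of a weight vector with an exponent vector. -/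
def wdot {n : ℕ} (w : Fin n → ℝ) (u : Fin n →₀ ℕ) : ℝ := ∑ i, w i * (u i : ℝ)

/-- The weight `ν(c) + w·u` of a term `c·x^u·e_k`. -/
def twt {R : Type*} {n d : ℕ} (ν : R → WithTop ℝ) (w : Fin n → ℝ) (t : Term R n d) :
    WithTop ℝ :=
  ν t.1 + (wdot w t.2.1 : ℝ)

/-- The term (pre)order: `c·x^u·e_i ≤ c'·x^{u'}·e_j` iff `ν(c) + w·u < ν(c') + w·u'`, or
they are equal and `x^u·e_i ⪰ x^{u'}·e_j` (smaller terms are "more initial"). -/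
def termLE {R : Type*} {n d : ℕ} (ν : R → WithTop ℝ) (w : Fin n → ℝ)
    (mo : MonomialOrder (Fin n)) (t t' : Term R n d) : Prop :=
  twt ν w t < twt ν w t' ∨
    (twt ν w t = twt ν w t' ∧ (mmLt mo t'.2 t.2 ∨ t.2 = t'.2))

/-- The coefficient of `f ∈ R[x₁,…,xₙ]^d` at the module monomial `m = (u, k)`. -/
def coeffM {R : Type*} [CommSemiring R] {n d : ℕ} (f : Fin d → MvPolynomial (Fin n) R)
    (m : MMon n d) : R :=
  coeff m.1 (f m.2)

/-- `t` is the initial term `in_{w,≺}(f)` of `f`: it is a term of `f` which is least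
in the term order among all terms of `f`. -/
def IsInit {R : Type*} [CommSemiring R] {n d : ℕ} (ν : R → WithTop ℝ) (w : Fin n → ℝ)
    (mo : MonomialOrder (Fin n)) (f : Fin d → MvPolynomial (Fin n) R) (t : Term R n d) : Prop :=
  t.1 ≠ 0 ∧ coeffM f t.2 = t.1 ∧
    ∀ m : MMon n d, coeffM f m ≠ 0 → termLE ν w mo t (coeffM f m, m)

/-- The term `c·x^u·e_k` as an element of `R[x₁,…,xₙ]^d`. -/
noncomputable def termEl {R : Type*} [CommSemiring R] {n d : ℕ} (t : Term R n d) :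
    Fin d → MvPolynomial (Fin n) R :=
  Pi.single t.2.2 (monomial t.2.1 t.1)

/-- The initial submodule `in_{w,≺}(I)`: the submodule generated by the initial terms of
the nonzero elements of `I`. -/
noncomputable def inSub {R : Type*} [CommRing R] {n d : ℕ} (ν : R → WithTop ℝ)
    (w : Fin n → ℝ) (mo : MonomialOrder (Fin n))
    (I : Submodule (MvPolynomial (Fin n) R) (Fin d → MvPolynomial (Fin n) R)) :
    Submodule (MvPolynomial (Fin n) R) (Fin d → MvPolynomial (Fin n) R) :=
  Submodule.span _ {g | ∃ f ∈ I, f ≠ 0 ∧ ∃ t : Term R n d, IsInit ν w mo f t ∧ g = termEl t}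

/-- `f ∈ R[x₁,…,xₙ]^d` is homogeneous (of some degree `δ`). -/
def IsHomog {R : Type*} [CommSemiring R] {n d : ℕ} (f : Fin d → MvPolynomial (Fin n) R) : Prop :=
  ∃ δ : ℕ, ∀ m : MMon n d, coeffM f m ≠ 0 → (∑ i, m.1 i) = δ

/-!
For every module monomial `m` pick an element `q m` with initial monomial `m`: the product
`x^u • g i` if `m` is `x^u` times the initial monomial of some `g i`, and `m` itself otherwise.
Elements with distinct initial monomials are linearly independent, and the `g i` being homogeneous,
`q m` has the degree of `m`. Hence, by a dimension count, the `q m` with `m` of degree at most `D`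
form a basis of the space of elements of degree at most `D`. Expand `f = ∑ c m • q m` in this basis.
The least initial term among the summands survives in the sum up to a change of coefficient that
preserves its valuation, because every other summand lies strictly after it in the term order.
So every summand lies at or after the initial term of `f`, and collecting the summands according to
the two kinds of `q m` yields the quotients and the remainder.
-/

theorem ValOn.v_one {K : Type*} [Field K] (V : ValOn K) : V.v 1 = 0 := by
  have h_ne_top : V.v 1 ≠ ⊤ := mt (V.v_eq_top_iff 1).1 one_ne_zero
  refine WithTop.add_left_cancel h_ne_top ?_
  rw [← V.v_mul 1 1 one_ne_zero one_ne_zero, mul_one, add_zero]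

/-- A valuation in the sense of `ValOn`, as a Mathlib additive valuation. -/
noncomputable def ValOn.toAddValuation {K : Type*} [Field K] (V : ValOn K) :
    AddValuation K (WithTop ℝ) :=
  AddValuation.of V.v ((V.v_eq_top_iff 0).2 rfl) V.v_one V.v_add_min fun a b => by
    have h_zero : V.v 0 = ⊤ := (V.v_eq_top_iff 0).2 rfl
    rcases eq_or_ne a 0 with rfl | ha
    · simp [h_zero]
    rcases eq_or_ne b 0 with rfl | hb
    · simp [h_zero]
    exact V.v_mul a b ha hb

section TermKey

variable {R : Type*} {n d : ℕ}

/-- The linear order in which the positions of terms are compared. The monomial part carries the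
dual order, because among terms of equal weight the greatest monomial comes first. -/
abbrev TermKey (mo : MonomialOrder (Fin n)) (d : ℕ) : Type _ :=
  WithTop ℝ ×ₗ (mo.syn ×ₗ Fin d)ᵒᵈ

/-- The position of a term in the term order: `termLE` is the preorder pulled back along it. -/
noncomputable def termKey (ν : R → WithTop ℝ) (w : Fin n → ℝ) (mo : MonomialOrder (Fin n))
    (t : Term R n d) : TermKey mo d :=
  toLex (twt ν w t, OrderDual.toDual (toLex (mo.toSyn t.2.1, t.2.2)))

theorem wdot_add (w : Fin n → ℝ) (u u' : Fin n →₀ ℕ) :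
    wdot w (u + u') = wdot w u + wdot w u' := by
  simp [wdot, mul_add, Finset.sum_add_distrib]

variable {ν : R → WithTop ℝ} {w : Fin n → ℝ} {mo : MonomialOrder (Fin n)}

theorem termLE_iff_termKey_le {t t' : Term R n d} :
    termLE ν w mo t t' ↔ termKey ν w mo t ≤ termKey ν w mo t' := by
  have h_monomial : mmLt mo t'.2 t.2 ∨ t.2 = t'.2 ↔
      toLex (mo.toSyn t'.2.1, t'.2.2) ≤ toLex (mo.toSyn t.2.1, t.2.2) := by
    simp only [le_iff_lt_or_eq, mmLt, Prod.Lex.toLex_lt_toLex, Prod.ext_iff,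
      EmbeddingLike.apply_eq_iff_eq, eq_comm]
  rw [termLE, termKey, termKey, Prod.Lex.toLex_le_toLex, OrderDual.toDual_le_toDual, h_monomial]

theorem snd_eq_of_termKey_eq {t t' : Term R n d} (h : termKey ν w mo t = termKey ν w mo t') :
    t.2 = t'.2 := by
  simp only [termKey, Prod.ext_iff, EmbeddingLike.apply_eq_iff_eq] at h
  exact Prod.ext h.2.1 h.2.2

theorem termKey_le_termKey_iff {a b : R} {m : MMon n d} :
    termKey ν w mo (a, m) ≤ termKey ν w mo (b, m) ↔ ν a ≤ ν b := by
  rw [termKey, termKey, Prod.Lex.toLex_le_toLex]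
  simp only [le_refl, and_true, ← le_iff_lt_or_eq, twt]
  exact WithTop.add_le_add_iff_right WithTop.coe_ne_top

theorem termKey_lt_termKey_iff {a b : R} {m : MMon n d} :
    termKey ν w mo (a, m) < termKey ν w mo (b, m) ↔ ν a < ν b :=
  lt_iff_lt_of_le_iff_le termKey_le_termKey_iff

theorem termKey_mul_le_termKey_mul [Ring R] (v : AddValuation R (WithTop ℝ)) {a c c' : R}
    {m m' : MMon n d} (u : Fin n →₀ ℕ) (ha : v a ≠ ⊤)
    (h : termKey v w mo (c, m) ≤ termKey v w mo (c', m')) :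
    termKey v w mo (a * c, (u + m.1, m.2)) ≤ termKey v w mo (a * c', (u + m'.1, m'.2)) := by
  have h_weight (b : R) (l : MMon n d) :
      twt v w (a * b, (u + l.1, l.2)) = (v a + (wdot w u : ℝ)) + twt v w (b, l) := by
    simp only [twt, v.map_mul, wdot_add, WithTop.coe_add]
    ac_rfl
  have h_ne_top : v a + (wdot w u : ℝ) ≠ ⊤ := WithTop.add_ne_top.2 ⟨ha, WithTop.coe_ne_top⟩
  simp only [termKey, Prod.Lex.toLex_le_toLex, OrderDual.toDual_le_toDual, h_weight, map_add,
    add_lt_add_iff_left, add_right_inj, WithTop.add_lt_add_iff_left h_ne_top] at h ⊢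
  exact h.imp_right (And.imp_left (congrArg _))

end TermKey

section Coefficients

variable {R : Type*} [CommSemiring R] {n d : ℕ}

@[simp]
theorem coeffM_zero (m : MMon n d) : coeffM (0 : Fin d → MvPolynomial (Fin n) R) m = 0 := by
  simp [coeffM]

@[simp]
theorem coeffM_add (p q : Fin d → MvPolynomial (Fin n) R) (m : MMon n d) :
    coeffM (p + q) m = coeffM p m + coeffM q m := by
  simp [coeffM]

@[simp]
theorem coeffM_smul (c : R) (p : Fin d → MvPolynomial (Fin n) R) (m : MMon n d) :
    coeffM (c • p) m = c * coeffM p m := by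
  simp [coeffM]

theorem coeffM_monomial_smul (u : Fin n →₀ ℕ) (c : R) (p : Fin d → MvPolynomial (Fin n) R)
    (m : MMon n d) : coeffM (monomial u c • p) (u + m.1, m.2) = c * coeffM p m := by
  simp [coeffM, coeff_monomial_mul]

theorem exists_eq_of_coeffM_monomial_smul_ne_zero {u : Fin n →₀ ℕ} {c : R}
    {p : Fin d → MvPolynomial (Fin n) R} {m : MMon n d} (h : coeffM (monomial u c • p) m ≠ 0) :
    ∃ m' : MMon n d, m = (u + m'.1, m'.2) ∧ coeffM p m' ≠ 0 := by
  have hu : u ≤ m.1 := by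
    by_contra hu
    simp [coeffM, coeff_monomial_mul', hu] at h
  obtain ⟨u', hu'⟩ := exists_add_of_le hu
  have hm : m = (u + u', m.2) := Prod.ext hu' rfl
  rw [hm, coeffM_monomial_smul u c p (u', m.2)] at h
  exact ⟨(u', m.2), hm, right_ne_zero_of_mul h⟩

theorem coeffM_termEl (t : Term R n d) (m : MMon n d) [Decidable (t.2 = m)] :
    coeffM (termEl t) m = if t.2 = m then t.1 else 0 := by
  obtain ⟨c, u, k⟩ := t
  obtain ⟨u', k'⟩ := m
  by_cases hk : k' = k
  · subst hk
    simp [coeffM, termEl, coeff_monomial]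
  · simp [coeffM, termEl, hk, Ne.symm hk]

theorem snd_eq_of_coeffM_termEl_ne_zero {t : Term R n d} {m : MMon n d}
    (h : coeffM (termEl t) m ≠ 0) : t.2 = m := by
  classical
  by_contra hne
  simp [coeffM_termEl, hne] at h

theorem coeffM_termEl_self (t : Term R n d) : coeffM (termEl t) t.2 = t.1 := by
  classical
  simp [coeffM_termEl]

variable (R) in
/-- The submodule of elements all of whose monomials lie in `S`. -/
def supportedIn (S : Set (MMon n d)) : Submodule R (Fin d → MvPolynomial (Fin n) R) where
  carrier := {p | ∀ m, coeffM p m ≠ 0 → m ∈ S}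
  zero_mem' m h := absurd (coeffM_zero m) h
  add_mem' {p q} hp hq m h := by
    by_cases hpm : coeffM p m = 0
    · exact hq m (by simpa [hpm] using h)
    · exact hp m hpm
  smul_mem' c p hp m h := hp m (right_ne_zero_of_mul (coeffM_smul c p m ▸ h))

variable (R) in
/-- The coefficients of an element supported in `S`, as a linear map. -/
def coeffsOn (S : Set (MMon n d)) : supportedIn R S →ₗ[R] S → R where
  toFun p m := coeffM p.1 m
  map_add' p q := funext fun m => coeffM_add p.1 q.1 m
  map_smul' c p := funext fun m => coeffM_smul c p.1 m

theorem coeffsOn_injective (S : Set (MMon n d)) : Function.Injective (coeffsOn R S) := by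
  refine fun p q h => Subtype.ext <| funext fun k => MvPolynomial.ext _ _ fun u => ?_
  by_cases hm : (u, k) ∈ S
  · exact congrFun h ⟨(u, k), hm⟩
  · exact (not_imp_comm.1 (p.2 (u, k)) hm).trans (not_imp_comm.1 (q.2 (u, k)) hm).symm

end Coefficients

theorem span_range_eq_supportedIn_of_linearIndependent {K : Type*} [Field K] {n d : ℕ}
    {S : Set (MMon n d)} [Finite S] {q : S → Fin d → MvPolynomial (Fin n) K}
    (hq : LinearIndependent K q) (hS : ∀ m, q m ∈ supportedIn K S) :
    Submodule.span K (Set.range q) = supportedIn K S := by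
  have := Fintype.ofFinite S
  have := Module.Finite.of_injective _ (coeffsOn_injective (R := K) S)
  refine Submodule.eq_of_le_of_finrank_le (Submodule.span_le.2 (Set.range_subset_iff.2 hS)) ?_
  calc
    Module.finrank K (supportedIn K S) ≤ Module.finrank K (S → K) :=
      LinearMap.finrank_le_finrank_of_injective (coeffsOn_injective S)
    _ = Module.finrank K (Submodule.span K (Set.range q)) := by
      rw [Module.finrank_fintype_fun_eq_card, finrank_span_eq_card hq]

section Homogeneous

variable {R : Type*} [CommSemiring R] {n d : ℕ}

theorem IsHomog.termEl (t : Term R n d) : IsHomog (termEl t) :=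
  ⟨∑ i, t.2.1 i, fun _ h => by rw [snd_eq_of_coeffM_termEl_ne_zero h]⟩

theorem IsHomog.monomial_smul {p : Fin d → MvPolynomial (Fin n) R} (hp : IsHomog p)
    (u : Fin n →₀ ℕ) (c : R) : IsHomog (monomial u c • p) := by
  obtain ⟨δ, hδ⟩ := hp
  refine ⟨∑ i, u i + δ, fun m h => ?_⟩
  obtain ⟨m', rfl, hm'⟩ := exists_eq_of_coeffM_monomial_smul_ne_zero h
  simp [Finset.sum_add_distrib, hδ m' hm']

/-- The module monomials of degree at most `D`. -/
def monomialsOfDegreeLE (n d D : ℕ) : Set (MMon n d) :=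
  {m | m.1.degree ≤ D}

instance monomialsOfDegreeLE.finite (n d D : ℕ) : Finite (monomialsOfDegreeLE n d D) :=
  ((Finsupp.finite_of_degree_le D).prod Set.finite_univ).subset fun _ hm => ⟨hm, trivial⟩

theorem IsHomog.mem_supportedIn_monomialsOfDegreeLE {p : Fin d → MvPolynomial (Fin n) R} {D : ℕ}
    {m : MMon n d} (hp : IsHomog p) (hpm : coeffM p m ≠ 0) (hm : m ∈ monomialsOfDegreeLE n d D) :
    p ∈ supportedIn R (monomialsOfDegreeLE n d D) := by
  obtain ⟨δ, hδ⟩ := hp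
  intro m' hm'
  have h_degree : m'.1.degree = m.1.degree := by
    rw [Finsupp.degree_eq_sum, Finsupp.degree_eq_sum, hδ m' hm', hδ m hpm]
  exact h_degree.trans_le hm

theorem exists_mem_supportedIn_monomialsOfDegreeLE (p : Fin d → MvPolynomial (Fin n) R) :
    ∃ D, p ∈ supportedIn R (monomialsOfDegreeLE n d D) :=
  ⟨Finset.univ.sup fun k => (p k).totalDegree, fun m hm =>
    (le_totalDegree (mem_support_iff.2 hm)).trans
      (Finset.le_sup (f := fun k => (p k).totalDegree) (Finset.mem_univ m.2))⟩

end Homogeneous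

section TermsIn

variable {R : Type*} [CommRing R] {n d : ℕ} {w : Fin n → ℝ} {mo : MonomialOrder (Fin n)}

/-- The elements all of whose terms lie in the up-closed part `U` of the term order. -/
def termsIn (v : AddValuation R (WithTop ℝ)) (w : Fin n → ℝ) (mo : MonomialOrder (Fin n))
    (U : UpperSet (TermKey mo d)) : AddSubmonoid (Fin d → MvPolynomial (Fin n) R) where
  carrier := {p | ∀ m, coeffM p m ≠ 0 → termKey v w mo (coeffM p m, m) ∈ U}
  zero_mem' m h := absurd (coeffM_zero m) h
  add_mem' {p q} hp hq m h := by
    rw [coeffM_add] at h ⊢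
    rcases eq_or_ne (coeffM p m) 0 with hpm | hpm
    · rw [hpm, zero_add] at h ⊢
      exact hq m h
    rcases eq_or_ne (coeffM q m) 0 with hqm | hqm
    · rw [hqm, add_zero]
      exact hp m hpm
    rcases v.map_add' (coeffM p m) (coeffM q m) with hle | hle
    · exact U.upper (termKey_le_termKey_iff.2 hle) (hp m hpm)
    · exact U.upper (termKey_le_termKey_iff.2 hle) (hq m hqm)

variable {v : AddValuation R (WithTop ℝ)}

theorem termsIn_antitone :
    Antitone (termsIn v w mo : UpperSet (TermKey mo d) → AddSubmonoid _) :=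
  fun _ _ hU _ hp m hm => hU (hp m hm)

theorem isInit_iff {p : Fin d → MvPolynomial (Fin n) R} {t : Term R n d} :
    IsInit v w mo p t ↔
      t.1 ≠ 0 ∧ coeffM p t.2 = t.1 ∧ p ∈ termsIn v w mo (UpperSet.Ici (termKey v w mo t)) := by
  simp only [IsInit, termLE_iff_termKey_le]
  rfl

theorem IsInit.mem_termsIn {p : Fin d → MvPolynomial (Fin n) R} {t : Term R n d}
    (h : IsInit v w mo p t) : p ∈ termsIn v w mo (UpperSet.Ici (termKey v w mo t)) :=
  (isInit_iff.1 h).2.2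

theorem IsInit.termKey_mem {p : Fin d → MvPolynomial (Fin n) R} {t : Term R n d}
    {U : UpperSet (TermKey mo d)} (h : IsInit v w mo p t) (hp : p ∈ termsIn v w mo U) :
    termKey v w mo t ∈ U := by
  have h_mem := hp t.2 (h.2.1 ▸ h.1)
  rwa [h.2.1] at h_mem

theorem not_isInit_zero {t : Term R n d} : ¬ IsInit v w mo 0 t := fun h =>
  h.1 (h.2.1.symm.trans (coeffM_zero t.2))

theorem isInit_termEl {t : Term R n d} (ht : t.1 ≠ 0) : IsInit v w mo (termEl t) t := by
  refine isInit_iff.2 ⟨ht, coeffM_termEl_self t, fun m hm => ?_⟩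
  obtain rfl := snd_eq_of_coeffM_termEl_ne_zero hm
  rw [coeffM_termEl_self]
  exact UpperSet.mem_Ici_iff.2 le_rfl

/-- Terms after the initial term of `p` can change its coefficient, but not its valuation. -/
theorem IsInit.exists_isInit_add {p q : Fin d → MvPolynomial (Fin n) R} {t : Term R n d}
    (hp : IsInit v w mo p t) (hq : q ∈ termsIn v w mo (UpperSet.Ioi (termKey v w mo t))) :
    ∃ t', IsInit v w mo (p + q) t' ∧ termKey v w mo t' = termKey v w mo t := by
  obtain ⟨h_ne, h_coeff, h_mem⟩ := isInit_iff.1 hp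
  have h_sum : coeffM (p + q) t.2 ≠ 0 ∧ v (coeffM (p + q) t.2) = v t.1 := by
    rw [coeffM_add, h_coeff]
    by_cases hqt : coeffM q t.2 = 0
    · simp [hqt, h_ne]
    have h_lt : v t.1 < v (coeffM q t.2) := termKey_lt_termKey_iff.1 (hq t.2 hqt)
    have h_val : v (t.1 + coeffM q t.2) = v t.1 := v.map_add_eq_of_lt_left h_lt
    refine ⟨fun h_zero => h_lt.not_ge ?_, h_val⟩
    rw [← h_val, h_zero, v.map_zero]
    exact le_top
  have h_key : termKey v w mo (coeffM (p + q) t.2, t.2) = termKey v w mo t := by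
    simp only [termKey, twt, h_sum.2]
  refine ⟨(coeffM (p + q) t.2, t.2), isInit_iff.2 ⟨h_sum.1, rfl, ?_⟩, h_key⟩
  rw [h_key]
  exact add_mem h_mem (termsIn_antitone (UpperSet.Ici_le_Ioi _) hq)

theorem exists_isInit_sum {ι : Type*} {S : Finset ι} (hS : S.Nonempty)
    {p : ι → Fin d → MvPolynomial (Fin n) R} {t : ι → Term R n d}
    (hp : ∀ j ∈ S, IsInit v w mo (p j) (t j)) (ht : Set.InjOn (fun j => (t j).2) S) :
    ∃ t', IsInit v w mo (∑ j ∈ S, p j) t' ∧ ∀ j ∈ S, termKey v w mo t' ≤ termKey v w mo (t j) := by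
  classical
  obtain ⟨j₀, hj₀, h_min⟩ := S.exists_min_image (fun j => termKey v w mo (t j)) hS
  have h_lt : ∀ j ∈ S.erase j₀, termKey v w mo (t j₀) < termKey v w mo (t j) := by
    intro j hj
    obtain ⟨h_ne, hjS⟩ := Finset.mem_erase.1 hj
    exact (h_min j hjS).lt_of_ne fun h_eq => h_ne (ht hjS hj₀ (snd_eq_of_termKey_eq h_eq).symm)
  have h_rest : ∑ j ∈ S.erase j₀, p j ∈ termsIn v w mo (UpperSet.Ioi (termKey v w mo (t j₀))) :=
    sum_mem fun j hj => termsIn_antitone (fun _ hx => (h_lt j hj).trans_le hx)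
      (hp j (Finset.mem_of_mem_erase hj)).mem_termsIn
  obtain ⟨t', ht', h_key⟩ := (hp j₀ hj₀).exists_isInit_add h_rest
  rw [Finset.add_sum_erase S p hj₀] at ht'
  exact ⟨t', ht', fun j hj => h_key.trans_le (h_min j hj)⟩

end TermsIn

section Field

variable {K : Type*} [Field K] {n d : ℕ} {v : AddValuation K (WithTop ℝ)} {w : Fin n → ℝ}
  {mo : MonomialOrder (Fin n)}

theorem IsInit.monomial_smul {p : Fin d → MvPolynomial (Fin n) K} {t : Term K n d}
    (hp : IsInit v w mo p t) (u : Fin n →₀ ℕ) {c : K} (hc : c ≠ 0) :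
    IsInit v w mo (monomial u c • p) (c * t.1, (u + t.2.1, t.2.2)) := by
  refine isInit_iff.2 ⟨mul_ne_zero hc hp.1, ?_, fun m hm => ?_⟩
  · rw [coeffM_monomial_smul, hp.2.1]
  · obtain ⟨m', rfl, hm'⟩ := exists_eq_of_coeffM_monomial_smul_ne_zero hm
    rw [coeffM_monomial_smul]
    exact termKey_mul_le_termKey_mul v u (v.ne_top_iff.2 hc) (hp.mem_termsIn m' hm')

theorem IsInit.smul {p : Fin d → MvPolynomial (Fin n) K} {t : Term K n d}
    (hp : IsInit v w mo p t) {c : K} (hc : c ≠ 0) : IsInit v w mo (c • p) (c * t.1, t.2) := by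
  have h := hp.monomial_smul 0 hc
  rwa [zero_add, ← C_apply, ← algebraMap_eq, algebraMap_smul] at h

variable {ι : Type*} {q : ι → Fin d → MvPolynomial (Fin n) K} {t : ι → Term K n d}

theorem exists_isInit_sum_smul (hq : ∀ j, IsInit v w mo (q j) (t j))
    (ht : Function.Injective fun j => (t j).2) {S : Finset ι} {a : ι → K}
    (ha : ∃ j ∈ S, a j ≠ 0) :
    ∃ t', IsInit v w mo (∑ j ∈ S, a j • q j) t' ∧
      ∀ j ∈ S, a j • q j ∈ termsIn v w mo (UpperSet.Ici (termKey v w mo t')) := by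
  classical
  have h_terms : ∀ j ∈ S.filter (a · ≠ 0), IsInit v w mo (a j • q j) (a j * (t j).1, (t j).2) :=
    fun j hj => (hq j).smul (Finset.mem_filter.1 hj).2
  obtain ⟨t', ht', h_le⟩ := exists_isInit_sum (Finset.filter_nonempty_iff.2 ha) h_terms ht.injOn
  have h_sum : ∑ j ∈ S.filter (a · ≠ 0), a j • q j = ∑ j ∈ S, a j • q j :=
    Finset.sum_filter_of_ne fun j _ h h_zero => h (by rw [h_zero, zero_smul])
  refine ⟨t', h_sum ▸ ht', fun j hj => ?_⟩
  by_cases haj : a j = 0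
  · rw [haj, zero_smul]
    exact zero_mem _
  · have hj' : j ∈ S.filter (a · ≠ 0) := Finset.mem_filter.2 ⟨hj, haj⟩
    exact termsIn_antitone (fun _ hx => (h_le j hj').trans hx) (h_terms j hj').mem_termsIn

theorem linearIndependent_of_isInit (hq : ∀ j, IsInit v w mo (q j) (t j))
    (ht : Function.Injective fun j => (t j).2) : LinearIndependent K q := by
  refine linearIndependent_iff'.2 fun S a h_sum => ?_
  by_contra! ha
  obtain ⟨t', ht', -⟩ := exists_isInit_sum_smul hq ht ha
  exact not_isInit_zero (h_sum ▸ ht')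

end Field

section Division

variable {K : Type*} [Field K] {n d : ℕ} {v : AddValuation K (WithTop ℝ)} {w : Fin n → ℝ}
  {mo : MonomialOrder (Fin n)} {ι : Type*} {g : ι → Fin d → MvPolynomial (Fin n) K}

/-- The part of the term order at or after the initial term of `p`; it is everything if `p = 0`. -/
noncomputable def fromInit (v : AddValuation K (WithTop ℝ)) (w : Fin n → ℝ)
    (mo : MonomialOrder (Fin n)) (p : Fin d → MvPolynomial (Fin n) K) : UpperSet (TermKey mo d) :=
  ⨆ (t : Term K n d) (_ : IsInit v w mo p t), UpperSet.Ici (termKey v w mo t)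

theorem mem_fromInit_iff {p : Fin d → MvPolynomial (Fin n) K} {x : TermKey mo d} :
    x ∈ fromInit v w mo p ↔ ∀ t, IsInit v w mo p t → termKey v w mo t ≤ x := by
  simp only [fromInit, UpperSet.mem_iSup₂_iff, UpperSet.mem_Ici_iff]

theorem termLE_of_mem_termsIn_fromInit {p q : Fin d → MvPolynomial (Fin n) K}
    (hq : q ∈ termsIn v w mo (fromInit v w mo p)) {t t' : Term K n d} (ht : IsInit v w mo p t)
    (ht' : IsInit v w mo q t') : termLE v w mo t t' :=
  termLE_iff_termKey_le.2 (mem_fromInit_iff.1 (ht'.termKey_mem hq) t ht)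

theorem smul_mem_termsIn_fromInit_sum {κ : Type*} [Fintype κ]
    {q : κ → Fin d → MvPolynomial (Fin n) K} {t : κ → Term K n d}
    (hq : ∀ j, IsInit v w mo (q j) (t j)) (ht : Function.Injective fun j => (t j).2)
    (a : κ → K) (j : κ) : a j • q j ∈ termsIn v w mo (fromInit v w mo (∑ j, a j • q j)) := by
  by_cases haj : a j = 0
  · rw [haj, zero_smul]
    exact zero_mem _
  obtain ⟨t', ht', h_mem⟩ := exists_isInit_sum_smul hq ht ⟨j, Finset.mem_univ j, haj⟩
  refine termsIn_antitone (fun x hx => mem_fromInit_iff.2 fun t'' ht'' => ?_)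
    (h_mem j (Finset.mem_univ j))
  exact (ht'.termKey_mem ht''.mem_termsIn).trans hx

/-- The module monomials divisible by no initial term of the `g i`: those allowed in a remainder. -/
def standardMonomials (v : AddValuation K (WithTop ℝ)) (w : Fin n → ℝ)
    (mo : MonomialOrder (Fin n)) (g : ι → Fin d → MvPolynomial (Fin n) K) : Set (MMon n d) :=
  {m | ∀ i, ∀ t : Term K n d, IsInit v w mo (g i) t → ¬ (t.2.2 = m.2 ∧ t.2.1 ≤ m.1)}

/-- The elements that can be divided by the family `g` in such a way that all terms of the
products `h i • g i` and of the remainder lie in `U`. -/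
def dividends (v : AddValuation K (WithTop ℝ)) (w : Fin n → ℝ) (mo : MonomialOrder (Fin n))
    (g : ι → Fin d → MvPolynomial (Fin n) K) (U : UpperSet (TermKey mo d)) :
    AddSubmonoid (Fin d → MvPolynomial (Fin n) K) where
  carrier := {f | ∃ (h : ι →₀ MvPolynomial (Fin n) K) (r : Fin d → MvPolynomial (Fin n) K),
    f = Finsupp.linearCombination _ g h + r ∧ (∀ i, h i • g i ∈ termsIn v w mo U) ∧
      r ∈ termsIn v w mo U ∧ r ∈ supportedIn K (standardMonomials v w mo g)}
  zero_mem' := ⟨0, 0, by simp, fun i => by simp, zero_mem _, zero_mem _⟩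
  add_mem' := by
    rintro _ _ ⟨h, r, rfl, hh, hr, hr'⟩ ⟨k, s, rfl, hk, hs, hs'⟩
    refine ⟨h + k, r + s, ?_, fun i => ?_, add_mem hr hs, add_mem hr' hs'⟩
    · rw [map_add, add_add_add_comm]
    · rw [Finsupp.add_apply, add_smul]
      exact add_mem (hh i) (hk i)

theorem smul_mem_dividends {U : UpperSet (TermKey mo d)} {i : ι} {c : MvPolynomial (Fin n) K}
    (h : c • g i ∈ termsIn v w mo U) : c • g i ∈ dividends v w mo g U := by
  classical
  refine ⟨Finsupp.single i c, 0, by simp, fun j => ?_, zero_mem _, zero_mem _⟩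
  rcases eq_or_ne i j with rfl | hij
  · rwa [Finsupp.single_eq_same]
  · rw [Finsupp.single_eq_of_ne' hij, zero_smul]
    exact zero_mem _

theorem mem_dividends_of_mem_supportedIn {U : UpperSet (TermKey mo d)}
    {r : Fin d → MvPolynomial (Fin n) K} (hr : r ∈ termsIn v w mo U)
    (hr' : r ∈ supportedIn K (standardMonomials v w mo g)) : r ∈ dividends v w mo g U :=
  ⟨0, r, by simp, fun i => by simp, hr, hr'⟩

/-- The element is `x^u • g i` if `m` is `x^u` times the initial monomial of some `g i`,
and `m` itself if `m` is standard. -/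
theorem exists_isInit_smul_mem_dividends (hg : ∀ i, IsHomog (g i)) (m : MMon n d) :
    ∃ (q : Fin d → MvPolynomial (Fin n) K) (a : K), IsInit v w mo q (a, m) ∧ IsHomog q ∧
      ∀ (c : K) (U : UpperSet (TermKey mo d)),
        c • q ∈ termsIn v w mo U → c • q ∈ dividends v w mo g U := by
  by_cases hm : m ∈ standardMonomials v w mo g
  · refine ⟨termEl (1, m), 1, isInit_termEl one_ne_zero, IsHomog.termEl _, fun c U h => ?_⟩
    refine mem_dividends_of_mem_supportedIn h (Submodule.smul_mem _ c fun m' hm' => ?_)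
    rwa [← snd_eq_of_coeffM_termEl_ne_zero hm']
  · simp only [standardMonomials, Set.mem_ofPred_eq, not_forall, not_not] at hm
    obtain ⟨i, t, ht, h_basis, h_le⟩ := hm
    obtain ⟨u, hu⟩ := exists_add_of_le h_le
    obtain rfl : m = (u + t.2.1, t.2.2) := Prod.ext (hu.trans (add_comm _ _)) h_basis.symm
    refine ⟨monomial u 1 • g i, 1 * t.1, ht.monomial_smul u one_ne_zero,
      (hg i).monomial_smul u 1, fun c U h => ?_⟩
    rw [← smul_assoc] at h ⊢
    exact smul_mem_dividends h

theorem mem_dividends_fromInit (hg : ∀ i, IsHomog (g i)) (f : Fin d → MvPolynomial (Fin n) K) :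
    f ∈ dividends v w mo g (fromInit v w mo f) := by
  obtain ⟨D, hD⟩ := exists_mem_supportedIn_monomialsOfDegreeLE f
  have := Fintype.ofFinite (monomialsOfDegreeLE n d D)
  choose q a h_init h_homog h_div using
    exists_isInit_smul_mem_dividends (v := v) (w := w) (mo := mo) hg
  have h_init' (m : monomialsOfDegreeLE n d D) : IsInit v w mo (q m) (a m, m) := h_init m
  have h_supp (m : monomialsOfDegreeLE n d D) :
      q m ∈ supportedIn K (monomialsOfDegreeLE n d D) :=
    (h_homog m).mem_supportedIn_monomialsOfDegreeLE ((h_init m).2.1 ▸ (h_init m).1) m.2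
  have h_indep := linearIndependent_of_isInit h_init' Subtype.val_injective
  rw [← span_range_eq_supportedIn_of_linearIndependent h_indep h_supp,
    Submodule.mem_span_range_iff_exists_fun] at hD
  obtain ⟨c, rfl⟩ := hD
  exact sum_mem fun m _ => h_div m (c m) _
    (smul_mem_termsIn_fromInit_sum h_init' Subtype.val_injective c m)

theorem division_theorem_module_general (v : AddValuation K (WithTop ℝ)) (w : Fin n → ℝ)
    (mo : MonomialOrder (Fin n)) (f : Fin d → MvPolynomial (Fin n) K) (hg : ∀ i, IsHomog (g i)) :
    ∃ (h : ι →₀ MvPolynomial (Fin n) K) (r : Fin d → MvPolynomial (Fin n) K),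
      f = Finsupp.linearCombination _ g h + r ∧
      (∀ i, ∀ t t' : Term K n d,
        IsInit v w mo f t → IsInit v w mo (h i • g i) t' → termLE v w mo t t') ∧
      (∀ t t' : Term K n d, IsInit v w mo f t → IsInit v w mo r t' → termLE v w mo t t') ∧
      (∀ m : MMon n d, coeffM r m ≠ 0 → ∀ i, ∀ t : Term K n d,
        IsInit v w mo (g i) t → ¬ (t.2.2 = m.2 ∧ t.2.1 ≤ m.1)) := by
  obtain ⟨h, r, h_eq, hh, hr, hr'⟩ := mem_dividends_fromInit (v := v) (w := w) (mo := mo) hg f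
  exact ⟨h, r, h_eq, fun i _ _ => termLE_of_mem_termsIn_fromInit (hh i),
    fun _ _ => termLE_of_mem_termsIn_fromInit hr, hr'⟩

end Division

/-- **Division theorem (normal form) for free modules over a field with valuation.**
Given a nonzero homogeneous `f` and nonzero homogeneous `g₁,…,g_s` in `K[x₁,…,xₙ]^d`,
there are `h₁,…,h_s ∈ K[x₁,…,xₙ]` and `r ∈ K[x₁,…,xₙ]^d` with `f = Σ hᵢgᵢ + r`,
`in_{w,≺}(hᵢgᵢ) ≥ in_{w,≺}(f)` whenever `hᵢgᵢ ≠ 0`, `in_{w,≺}(r) ≥ in_{w,≺}(f)` if `r ≠ 0`,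
and no term of `r` divisible by any `in_{w,≺}(gᵢ)`. -/
theorem division_theorem_module {K : Type*} [Field K] {n d : ℕ}
    (V : ValOn K) (w : Fin n → ℝ) (mo : MonomialOrder (Fin n)) {s : ℕ}
    (f : Fin d → MvPolynomial (Fin n) K) (hf : f ≠ 0) (hfhom : IsHomog f)
    (g : Fin s → Fin d → MvPolynomial (Fin n) K)
    (hg : ∀ i, g i ≠ 0) (hghom : ∀ i, IsHomog (g i)) :
    ∃ (h : Fin s → MvPolynomial (Fin n) K) (r : Fin d → MvPolynomial (Fin n) K),
      f = (∑ i, h i • g i) + r ∧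
      (∀ i, h i • g i ≠ 0 → ∀ t t' : Term K n d,
        IsInit V.v w mo f t → IsInit V.v w mo (h i • g i) t' → termLE V.v w mo t t') ∧
      (r ≠ 0 → ∀ t t' : Term K n d,
        IsInit V.v w mo f t → IsInit V.v w mo r t' → termLE V.v w mo t t') ∧
      (∀ m : MMon n d, coeffM r m ≠ 0 → ∀ i, ∀ t : Term K n d,
        IsInit V.v w mo (g i) t → ¬ (t.2.2 = m.2 ∧ t.2.1 ≤ m.1)) := by
  obtain ⟨h, r, h_eq, hh, hr, h_std⟩ :=
    division_theorem_module_general V.toAddValuation w mo f hghom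
  rw [Finsupp.linearCombination_apply, Finsupp.sum_fintype _ _ fun i => zero_smul _ (g i)] at h_eq
  exact ⟨h, r, h_eq, fun i _ => hh i, fun _ => hr, h_std⟩
end

section
/- Let V be a finite-dimensional vector space over a field K with valuation v, let v₁,…,v_s ∈ V and w ∈ ℝ^s. Then for every vector x in the K-linear span of {v₁,…,v_s}, there exists c ∈ K^s with Σᵢ cᵢvᵢ = x such that trop(c)(w) is maximal: for every c' ∈ K^s with Σᵢ c'ᵢvᵢ = x one has trop(c')(w) ≤ trop(c)(w). -/
/-- The tropicalization of the linear form `Σᵢ cᵢxᵢ` evaluated at `w`: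
`trop(c)(w) = minᵢ (v(cᵢ) + wᵢ)` (with `v(0) = ∞`, so `trop(0)(w) = ∞`). -/
noncomputable def trop {K : Type*} [Field K] (V : ValOn K) {s : ℕ}
    (c : Fin s → K) (w : Fin s → ℝ) : WithTop ℝ :=
  Finset.univ.inf fun i => V.v (c i) + (w i : ℝ)

/-!
The function `c ↦ minᵢ (v(cᵢ) + wᵢ)` is to be maximized over a coset of the space `N` of linear
relations. A nonzero `N` contains a vector `n` with a pivot `i`: `nᵢ = 1`, and the minimum for `n`
is attained at `i`. Clearing the pivot coordinate, `c ↦ c - cᵢ n`, stays in the coset and never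
decreases the minimum, because `v(cᵢ nⱼ) + wⱼ ≥ v(cᵢ) + wᵢ` for all `j`. So it suffices to maximize
over the vectors of the coset with `cᵢ = 0`, which form a coset of the smaller space
`{m ∈ N | mᵢ = 0}`.
-/

section TropEval

variable {K Γ ι : Type*} [LinearOrderedAddCommMonoidWithTop Γ] [Fintype ι]

section Ring

variable [Ring K] (v : AddValuation K Γ) (w : ι → Γ)

/-- The tropicalization of the linear form with coefficients `c`, evaluated at `w`, for an
arbitrary additive valuation. It plays the role of a non-archimedean norm of `c` with weights `w`,
and some of the weights may be `⊤`. -/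
def tropEval (c : ι → K) : Γ :=
  Finset.univ.inf fun i => v (c i) + w i

theorem tropEval_le (c : ι → K) (i : ι) : tropEval v w c ≤ v (c i) + w i :=
  Finset.inf_le (Finset.mem_univ i)

theorem tropEval_smul (a : K) (c : ι → K) : tropEval v w (a • c) = v a + tropEval v w c := by
  have monotone_add : Monotone (v a + ·) := fun _ _ h => by dsimp only; gcongr
  simp only [tropEval, Finset.apply_inf_eq_inf_comp_of_linearOrder (v a + ·) monotone_add
    (add_top _), Function.comp_def, Pi.smul_apply, smul_eq_mul, v.map_mul, add_assoc]

theorem min_tropEval_le_tropEval_sub (c d : ι → K) :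
    min (tropEval v w c) (tropEval v w d) ≤ tropEval v w (c - d) :=
  Finset.le_inf fun i _ => calc
    min (tropEval v w c) (tropEval v w d)
      ≤ min (v (c i) + w i) (v (d i) + w i) :=
        min_le_min (tropEval_le v w c i) (tropEval_le v w d i)
    _ = min (v (c i)) (v (d i)) + w i := min_add_add_right _ _ _
    _ ≤ v ((c - d) i) + w i := by gcongr; exact v.map_sub (c i) (d i)

theorem tropEval_le_tropEval_sub_smul {n : ι → K} {i : ι} (hn : w i ≤ tropEval v w n)
    (c : ι → K) : tropEval v w c ≤ tropEval v w (c - c i • n) := by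
  have le_smul : tropEval v w c ≤ tropEval v w (c i • n) := calc
    tropEval v w c ≤ v (c i) + w i := tropEval_le v w c i
    _ ≤ v (c i) + tropEval v w n := by gcongr
    _ = tropEval v w (c i • n) := (tropEval_smul v w (c i) n).symm
  exact (le_min le_rfl le_smul).trans (min_tropEval_le_tropEval_sub v w c (c i • n))

theorem exists_ne_zero_tropEval_eq {n : ι → K} (hn : n ≠ 0) :
    ∃ i, n i ≠ 0 ∧ tropEval v w n = v (n i) + w i := by
  classical
  obtain ⟨k, hk⟩ := Function.ne_iff.1 hn
  -- Restricting to the support matters when `w` has infinite entries: the minimum over all indices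
  -- could then be attained at a zero coordinate.
  obtain ⟨i, hi, hmin⟩ := Finset.exists_min_image {j | n j ≠ 0} (fun j => v (n j) + w j)
    ⟨k, by simpa using hk⟩
  simp only [Finset.mem_filter_univ] at hi hmin
  refine ⟨i, hi, (tropEval_le v w n i).antisymm (Finset.le_inf fun j _ => ?_)⟩
  by_cases hj : n j = 0
  · simp [hj]
  · exact hmin j hj

end Ring

variable [DivisionRing K] (v : AddValuation K Γ) (w : ι → Γ)

theorem exists_mem_apply_eq_one_le_tropEval {N : Submodule K (ι → K)} (hN : N ≠ ⊥) :
    ∃ n ∈ N, ∃ i, n i = 1 ∧ w i ≤ tropEval v w n := by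
  obtain ⟨n, hnN, hn⟩ := Submodule.exists_mem_ne_zero_of_ne_bot hN
  obtain ⟨i, hi, heq⟩ := exists_ne_zero_tropEval_eq v w hn
  refine ⟨(n i)⁻¹ • n, N.smul_mem _ hnN, i, inv_mul_cancel₀ hi, ?_⟩
  rw [tropEval_smul, heq, ← add_assoc, ← v.map_mul, inv_mul_cancel₀ hi, v.map_one, zero_add]

theorem exists_max_tropEval_add (N : Submodule K (ι → K)) (c : ι → K) :
    ∃ m ∈ N, ∀ m' ∈ N, tropEval v w (c + m') ≤ tropEval v w (c + m) := by
  induction N using WellFoundedLT.induction generalizing c with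
  | ind N ih =>
    rcases eq_or_ne N ⊥ with rfl | hN
    · exact ⟨0, zero_mem _, fun m' hm' => by rw [(Submodule.mem_bot K).1 hm']⟩
    obtain ⟨n, hnN, i, hni, hn⟩ := exists_mem_apply_eq_one_le_tropEval v w hN
    let N₀ := N ⊓ LinearMap.ker (LinearMap.proj i : (ι → K) →ₗ[K] K)
    have hlt : N₀ < N := inf_lt_left.2 fun hle => one_ne_zero (hni.symm.trans (hle hnN))
    obtain ⟨m, hm, hmax⟩ := ih N₀ hlt (c - c i • n)
    refine ⟨m - c i • n, N.sub_mem hm.1 (N.smul_mem _ hnN), fun m' hm' => ?_⟩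
    have cleared_mem : m' - m' i • n ∈ N₀ :=
      ⟨N.sub_mem hm' (N.smul_mem _ hnN), by simp [hni]⟩
    calc tropEval v w (c + m')
        ≤ tropEval v w (c + m' - (c + m') i • n) := tropEval_le_tropEval_sub_smul v w hn _
      _ = tropEval v w (c - c i • n + (m' - m' i • n)) := by
        rw [Pi.add_apply, add_smul, add_sub_add_comm]
      _ ≤ tropEval v w (c - c i • n + m) := hmax _ cleared_mem
      _ = tropEval v w (c + (m - c i • n)) := by rw [sub_add_eq_add_sub, add_sub_assoc]

theorem exists_max_trop_representation_general {M : Type*} [AddCommGroup M] [Module K M]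
    (b : ι → M) {x : M} (hx : x ∈ Submodule.span K (Set.range b)) :
    ∃ c : ι → K, ∑ i, c i • b i = x ∧
      ∀ c' : ι → K, ∑ i, c' i • b i = x → tropEval v w c' ≤ tropEval v w c := by
  obtain ⟨c₀, rfl⟩ := (Submodule.mem_span_range_iff_exists_fun K).1 hx
  let relations := LinearMap.ker (Fintype.linearCombination K b)
  have mem_relations (m : ι → K) :
      m ∈ relations ↔ ∑ i, (c₀ + m) i • b i = ∑ i, c₀ i • b i := by
    simp [relations, Fintype.linearCombination_apply, add_smul, Finset.sum_add_distrib]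
  obtain ⟨m, hm, hmax⟩ := exists_max_tropEval_add v w relations c₀
  refine ⟨c₀ + m, (mem_relations m).1 hm, fun c' hc' => ?_⟩
  have diff_mem : c' - c₀ ∈ relations := (mem_relations _).2 (by rwa [add_sub_cancel])
  simpa only [add_sub_cancel] using hmax (c' - c₀) diff_mem

end TropEval

namespace ValOn

variable {K : Type*} [Field K] (V : ValOn K)

theorem map_zero : V.v 0 = ⊤ :=
  (V.v_eq_top_iff 0).2 rfl

theorem map_one : V.v 1 = 0 := by
  have ne_top : V.v 1 ≠ ⊤ := (V.v_eq_top_iff 1).not.2 one_ne_zero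
  have add_self : V.v 1 + V.v 1 = 0 + V.v 1 := by
    rw [← V.v_mul 1 1 one_ne_zero one_ne_zero, one_mul, zero_add]
  exact (WithTop.add_right_inj ne_top).1 add_self

theorem map_mul (a b : K) : V.v (a * b) = V.v a + V.v b := by
  rcases eq_or_ne a 0 with rfl | ha
  · rw [zero_mul, V.map_zero, top_add]
  rcases eq_or_ne b 0 with rfl | hb
  · rw [mul_zero, V.map_zero, add_top]
  exact V.v_mul a b ha hb

/-- A real-valued valuation as an `AddValuation`, so that Mathlib's theory of additive valuations
applies to it. -/
noncomputable def toAddValuation_s2 : AddValuation K (WithTop ℝ) :=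
  AddValuation.of V.v V.map_zero V.map_one V.v_add_min V.map_mul

theorem trop_eq_tropEval {s : ℕ} (c : Fin s → K) (w : Fin s → ℝ) :
    trop V c w = tropEval V.toAddValuation_s2 (fun i => (w i : WithTop ℝ)) c :=
  rfl

end ValOn

/-- **Existence of a representation maximizing the tropicalization.**
Let `V` be a finite-dimensional vector space over a field `K` with valuation, let
`v₁,…,v_s ∈ V` and `w ∈ ℝ^s`. For every `x` in the span of the `vᵢ` there exists
`c ∈ K^s` with `Σᵢ cᵢvᵢ = x` such that `trop(c)(w)` is maximal among all such
representations of `x`. -/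
theorem exists_max_trop_representation {K : Type*} [Field K] (Val : ValOn K)
    (M : Type*) [AddCommGroup M] [Module K M] [FiniteDimensional K M]
    {s : ℕ} (v : Fin s → M) (w : Fin s → ℝ)
    (x : M) (hx : x ∈ Submodule.span K (Set.range v)) :
    ∃ c : Fin s → K, (∑ i, c i • v i) = x ∧
      ∀ c' : Fin s → K, (∑ i, c' i • v i) = x → trop Val c' w ≤ trop Val c w := by
  simpa only [Val.trop_eq_tropEval] using
    exists_max_trop_representation_general Val.toAddValuation_s2 (fun i => (w i : WithTop ℝ)) v hx
end
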